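/- arXiv:2411.08763 — 9 statements merged into one kernel-verified Lean document; each statement's English description precedes it below -/
import Mathlib

section
/- Let (B, S, π) be a return risk measurement regime with associated MARRM η. If C and S are cones and π is positively homogeneous, then η is positively homogeneous: η(λX) = λ·η(X) for all λ ∈ (0,∞) and X ∈ C (with the convention λ·(+∞) = +∞). -/
open MeasureTheory Filter Set ENNReal

/-- The set of strictly positive random variables (positive representatives of
elements of `L⁰₊₊`). -/
def L0pos (Ω : Type*) : Set (Ω → ℝ) := {X | ∀ ω, 0 < X ω}

/-- The multi-asset return risk measure (MARRM) associated with the security set `S`,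
the relative acceptance set `B` and the pricing map `π`:
`η(X) = inf {π(Z) : Z ∈ S, X/Z ∈ B}`, with `inf ∅ = ∞`. -/
noncomputable def marrm {Ω : Type*} (S B : Set (Ω → ℝ)) (π : (Ω → ℝ) → ℝ) (X : Ω → ℝ) : ℝ≥0∞ :=
  sInf ((fun Z => ENNReal.ofReal (π Z)) '' {Z | Z ∈ S ∧ (fun ω => X ω / Z ω) ∈ B})

/-! Scaling a position by `l > 0` scales the securities that make it acceptable by `l`, because
`(l X) / Z = X / (l⁻¹ Z)`; positive homogeneity of the price then moves `l` out of the infimum. -/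

/-- The securities that make the position `X` acceptable, i.e. the constraint set
`{Z ∈ S | X / Z ∈ B}` over which the risk measure `marrm` minimises the price. -/
def eligibleSecurities {Ω : Type*} (S B : Set (Ω → ℝ)) (X : Ω → ℝ) : Set (Ω → ℝ) :=
  {Z | Z ∈ S ∧ X / Z ∈ B}

section Scaling

open scoped Pointwise

variable {Ω : Type*} {S : Set (Ω → ℝ)} {π : (Ω → ℝ) → ℝ} {l : ℝ}

theorem marrm_eq_biInf (S B : Set (Ω → ℝ)) (π : (Ω → ℝ) → ℝ) (X : Ω → ℝ) :
    marrm S B π X = ⨅ Z ∈ eligibleSecurities S B X, ENNReal.ofReal (π Z) :=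
  sInf_image

theorem smul_set_eq_self_of_cone {𝕜 E : Type*} [GroupWithZero 𝕜] [PartialOrder 𝕜]
    [PosMulReflectLT 𝕜] [MulAction 𝕜 E] {T : Set E}
    (hT : ∀ r : 𝕜, 0 < r → ∀ x ∈ T, r • x ∈ T) {r : 𝕜} (hr : 0 < r) : r • T = T := by
  refine Subset.antisymm (smul_set_subset_iff.2 fun x hx => hT r hr x hx) fun x hx => ?_
  exact (mem_smul_set_iff_inv_smul_mem₀ hr.ne' T x).2 (hT r⁻¹ (inv_pos.2 hr) x hx)

theorem eligibleSecurities_smul (hl : l ≠ 0) (hS : l • S = S) (B : Set (Ω → ℝ)) (X : Ω → ℝ) :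
    eligibleSecurities S B (l • X) = l • eligibleSecurities S B X := by
  ext Z
  have hdiv : l • X / Z = X / (l⁻¹ • Z) := by
    ext ω
    simp only [Pi.div_apply, Pi.smul_apply, smul_eq_mul, div_eq_mul_inv, mul_inv, inv_inv]
    ring
  have hmem : Z ∈ S ↔ l⁻¹ • Z ∈ S := by
    rw [← mem_smul_set_iff_inv_smul_mem₀ hl, hS]
  rw [mem_smul_set_iff_inv_smul_mem₀ hl]
  exact and_congr hmem (by rw [hdiv])

theorem marrm_smul (hl : 0 < l) (hS : l • S = S) (hπ : ∀ Z ∈ S, π (l • Z) = l * π Z)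
    (B : Set (Ω → ℝ)) (X : Ω → ℝ) :
    marrm S B π (l • X) = ENNReal.ofReal l * marrm S B π X := by
  have hl₀ : ENNReal.ofReal l ≠ 0 := (ENNReal.ofReal_pos.2 hl).ne'
  calc marrm S B π (l • X)
      = ⨅ Z ∈ eligibleSecurities S B X, ENNReal.ofReal (π (l • Z)) := by
        rw [marrm_eq_biInf, eligibleSecurities_smul hl.ne' hS, ← image_smul, iInf_image]
    _ = ⨅ Z ∈ eligibleSecurities S B X, ENNReal.ofReal l * ENNReal.ofReal (π Z) :=
        biInf_congr fun Z hZ => by rw [hπ Z hZ.1, ENNReal.ofReal_mul hl.le]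
    _ = ENNReal.ofReal l * marrm S B π X := by
        simp only [marrm_eq_biInf, ENNReal.mul_iInf_of_ne hl₀ ENNReal.ofReal_ne_top]

end Scaling

theorem marrm_positively_homogeneous_general {Ω : Type*} (S B : Set (Ω → ℝ)) (π : (Ω → ℝ) → ℝ)
    (hS₀ : ∀ Z ∈ S, ∀ ω, Z ω ≠ 0) (hπ₀ : ∀ Z ∈ S, 0 ≤ π Z)
    (hScone : ∀ l : ℝ, 0 < l → ∀ Z ∈ S, l • Z ∈ S)
    (hπhom : ∀ l : ℝ, 0 < l → ∀ Z ∈ S, π (l • Z) = l * π Z) (l : ℝ) (hl : 0 < l) (X : Ω → ℝ) :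
    marrm S B π (l • X) = ENNReal.ofReal l * marrm S B π X :=
  marrm_smul hl (smul_set_eq_self_of_cone hScone hl) (hπhom l hl) B X

theorem marrm_positively_homogeneous {Ω : Type*} [MeasurableSpace Ω] (P : Measure Ω) [IsProbabilityMeasure P]
    (C S K B : Set (Ω → ℝ)) (π : (Ω → ℝ) → ℝ)
    (hCne : C.Nonempty) (hCpos : C ⊆ L0pos Ω)
    (hSne : S.Nonempty) (hSpos : S ⊆ L0pos Ω)
    (hπpos : ∀ Z ∈ S, 0 < π Z)
    (hKne : K.Nonempty) (hKpos : K ⊆ L0pos Ω)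
    (hcompat : ∀ X ∈ C, ∀ Z ∈ S, (fun ω => X ω / Z ω) ∈ K)
    (hBne : B.Nonempty) (hBsub : B ⊆ K) (hBproper : B ≠ K)
    (hBmono : ∀ X ∈ B, ∀ Y ∈ K, (∀ᵐ ω ∂P, Y ω ≤ X ω) → Y ∈ B)
    (hCcone : ∀ l : ℝ, 0 < l → ∀ X ∈ C, (fun ω => l * X ω) ∈ C)
    (hScone : ∀ l : ℝ, 0 < l → ∀ Z ∈ S, (fun ω => l * Z ω) ∈ S)
    (hπhom : ∀ l : ℝ, 0 < l → ∀ Z ∈ S, π (fun ω => l * Z ω) = l * π Z) :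
    ∀ l : ℝ, 0 < l → ∀ X ∈ C,
      marrm S B π (fun ω => l * X ω) = ENNReal.ofReal l * marrm S B π X := by
  intro l hl X _
  exact marrm_positively_homogeneous_general S B π (fun Z hZ ω => (hSpos hZ ω).ne')
    (fun Z hZ => (hπpos Z hZ).le) hScone hπhom l hl X
end

section
/- Let (B, S, π) be a return risk measurement regime with associated MARRM η. If C and S are star-shaped sets and π is star-shaped, then η is star-shaped: η(λX) ≤ λ·η(X) for all λ ∈ (0,1) and X ∈ C (with the convention λ·(+∞) = +∞). -/
open MeasureTheory Filter Set ENNReal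

section MARRM

variable {Ω : Type*} {S B : Set (Ω → ℝ)} {π : (Ω → ℝ) → ℝ} {X Z : Ω → ℝ}

theorem marrm_le (hZ : Z ∈ S) (hXZ : (fun ω => X ω / Z ω) ∈ B) :
    marrm S B π X ≤ ENNReal.ofReal (π Z) :=
  sInf_le (mem_image_of_mem _ ⟨hZ, hXZ⟩)

theorem mul_marrm_eq_iInf {c : ℝ≥0∞} (hc₀ : c ≠ 0) (hc : c ≠ ∞) :
    c * marrm S B π X =
      ⨅ Z ∈ {Z | Z ∈ S ∧ (fun ω => X ω / Z ω) ∈ B}, c * ENNReal.ofReal (π Z) := by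
  simp only [marrm, sInf_image, ENNReal.mul_iInf_of_ne hc₀ hc]

theorem marrm_star_shaped_general (hSpos : S ⊆ L0pos Ω) (hπpos : ∀ Z ∈ S, 0 < π Z)
    {l : ℝ} (hl : 0 < l) (hS : ∀ Z ∈ S, (fun ω => l * Z ω) ∈ S)
    (hπ : ∀ Z ∈ S, π (fun ω => l * Z ω) ≤ l * π Z) (X : Ω → ℝ) :
    marrm S B π (fun ω => l * X ω) ≤ ENNReal.ofReal l * marrm S B π X := by
  rw [mul_marrm_eq_iInf (ENNReal.ofReal_pos.2 hl).ne' ENNReal.ofReal_ne_top]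
  refine le_iInf₂ fun Z ⟨hZ, hXZ⟩ => ?_
  have ratio_eq : (fun ω => l * X ω / (l * Z ω)) = fun ω => X ω / Z ω :=
    funext fun ω =>
      have Z_pos : 0 < Z ω := hSpos hZ ω
      (div_eq_div_iff (mul_pos hl Z_pos).ne' Z_pos.ne').2 (by ring)
  calc marrm S B π (fun ω => l * X ω)
      ≤ ENNReal.ofReal (π fun ω => l * Z ω) := marrm_le (hS Z hZ) (ratio_eq ▸ hXZ)
    _ ≤ ENNReal.ofReal (l * π Z) := ENNReal.ofReal_le_ofReal (hπ Z hZ)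
    _ = ENNReal.ofReal l * ENNReal.ofReal (π Z) := ENNReal.ofReal_mul' (hπpos Z hZ).le

end MARRM

theorem marrm_star_shaped {Ω : Type*} [MeasurableSpace Ω] (P : Measure Ω) [IsProbabilityMeasure P]
    (C S K B : Set (Ω → ℝ)) (π : (Ω → ℝ) → ℝ)
    (hCne : C.Nonempty) (hCpos : C ⊆ L0pos Ω)
    (hSne : S.Nonempty) (hSpos : S ⊆ L0pos Ω)
    (hπpos : ∀ Z ∈ S, 0 < π Z)
    (hKne : K.Nonempty) (hKpos : K ⊆ L0pos Ω)
    (hcompat : ∀ X ∈ C, ∀ Z ∈ S, (fun ω => X ω / Z ω) ∈ K)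
    (hBne : B.Nonempty) (hBsub : B ⊆ K) (hBproper : B ≠ K)
    (hBmono : ∀ X ∈ B, ∀ Y ∈ K, (∀ᵐ ω ∂P, Y ω ≤ X ω) → Y ∈ B)
    (hCstar : ∀ l ∈ Set.Ioo (0:ℝ) 1, ∀ X ∈ C, (fun ω => l * X ω) ∈ C)
    (hSstar : ∀ l ∈ Set.Ioo (0:ℝ) 1, ∀ Z ∈ S, (fun ω => l * Z ω) ∈ S)
    (hπstar : ∀ l ∈ Set.Ioo (0:ℝ) 1, ∀ Z ∈ S, π (fun ω => l * Z ω) ≤ l * π Z) :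
    ∀ l ∈ Set.Ioo (0:ℝ) 1, ∀ X ∈ C,
      marrm S B π (fun ω => l * X ω) ≤ ENNReal.ofReal l * marrm S B π X := by
  intro l hl X _
  exact marrm_star_shaped_general hSpos hπpos hl.1 (hSstar l hl) (hπstar l hl) X
end

section
/- (Reduction lemma, part 1.) Let (B, S, π) be a return risk measurement regime with associated MARRM η. If S is a cone and π is positively homogeneous, then for every X ∈ C one has η(X) = inf{λ > 0 : X/λ ∈ B·S_1}, where S_1 = {Z ∈ S : π(Z) = 1} and B·S_1 = {Y·Z : Y ∈ B, Z ∈ S_1}. -/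
open MeasureTheory Filter Set ENNReal

/-- The product `A · D = {Y · Z : Y ∈ A, Z ∈ D}` of two sets of random variables. -/
def mulSet {Ω : Type*} (A D : Set (Ω → ℝ)) : Set (Ω → ℝ) :=
  {W | ∃ Y ∈ A, ∃ Z ∈ D, W = fun ω => Y ω * Z ω}

/-!
Every `Z ∈ S` with price `l > 0` is `l` times a security of unit price, namely `l⁻¹ • Z`, and
`X / Z = (X / l) / (l⁻¹ • Z)`. Hence the prices `π Z` with `X / Z ∈ B` are exactly the `l > 0` with
`X / l ∈ B · S₁`, where `S₁ = {Z ∈ S : π(Z) = 1}`, so both infima run over the same set.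
-/

open scoped Pointwise in
theorem smul_setOf_eq_one {𝕜 E : Type*} [GroupWithZero 𝕜] [PartialOrder 𝕜] [PosMulReflectLT 𝕜]
    [MulAction 𝕜 E] {S : Set E} {π : E → 𝕜} {l : 𝕜} (hl : 0 < l)
    (hcone : ∀ r : 𝕜, 0 < r → ∀ Z ∈ S, r • Z ∈ S)
    (hhom : ∀ r : 𝕜, 0 < r → ∀ Z ∈ S, π (r • Z) = r * π Z) :
    l • {Z | Z ∈ S ∧ π Z = 1} = {Z | Z ∈ S ∧ π Z = l} := by
  apply Subset.antisymm
  · rintro _ ⟨Z, ⟨hZ, hπ⟩, rfl⟩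
    exact ⟨hcone l hl Z hZ, by rw [hhom l hl Z hZ, hπ, mul_one]⟩
  · rintro Z ⟨hZ, hπ⟩
    have hl' : 0 < l⁻¹ := inv_pos.mpr hl
    rw [mem_smul_set_iff_inv_smul_mem₀ hl.ne']
    exact ⟨hcone _ hl' Z hZ, by rw [hhom _ hl' Z hZ, hπ, inv_mul_cancel₀ hl.ne']⟩

section

variable {Ω : Type*}

theorem mem_mulSet_iff_exists_div_mem {A D : Set (Ω → ℝ)} (hD : ∀ Z ∈ D, ∀ ω, Z ω ≠ 0)
    {W : Ω → ℝ} : W ∈ mulSet A D ↔ ∃ Z ∈ D, W / Z ∈ A := by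
  constructor
  · rintro ⟨Y, hY, Z, hZ, rfl⟩
    have hquot : (fun ω => Y ω * Z ω) / Z = Y :=
      funext fun ω => mul_div_cancel_right₀ (Y ω) (hD Z hZ ω)
    exact ⟨Z, hZ, hquot.symm ▸ hY⟩
  · rintro ⟨Z, hZ, hY⟩
    exact ⟨W / Z, hY, Z, hZ, funext fun ω => (div_mul_cancel₀ (W ω) (hD Z hZ ω)).symm⟩

variable {S : Set (Ω → ℝ)} {π : (Ω → ℝ) → ℝ}

theorem image_setOf_div_mem_eq (hS0 : ∀ Z ∈ S, ∀ ω, Z ω ≠ 0) (hπpos : ∀ Z ∈ S, 0 < π Z)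
    (hScone : ∀ r : ℝ, 0 < r → ∀ Z ∈ S, r • Z ∈ S)
    (hπhom : ∀ r : ℝ, 0 < r → ∀ Z ∈ S, π (r • Z) = r * π Z) (B : Set (Ω → ℝ)) (X : Ω → ℝ) :
    π '' {Z | Z ∈ S ∧ X / Z ∈ B} =
      {l : ℝ | 0 < l ∧ (fun ω => X ω / l) ∈ mulSet B {Z | Z ∈ S ∧ π Z = 1}} := by
  ext l
  have hdiv (Z : Ω → ℝ) : (fun ω => X ω / l) / Z = X / (l • Z) :=
    funext fun ω => div_div (X ω) l (Z ω)
  calc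
    l ∈ π '' {Z | Z ∈ S ∧ X / Z ∈ B}
    _ ↔ 0 < l ∧ ∃ Z ∈ {Z | Z ∈ S ∧ π Z = l}, X / Z ∈ B := by
      constructor
      · rintro ⟨Z, ⟨hZ, hB⟩, rfl⟩
        exact ⟨hπpos Z hZ, Z, ⟨hZ, rfl⟩, hB⟩
      · rintro ⟨-, Z, ⟨hZ, hπ⟩, hB⟩
        exact ⟨Z, ⟨hZ, hB⟩, hπ⟩
    _ ↔ 0 < l ∧ ∃ Z ∈ {Z | Z ∈ S ∧ π Z = 1}, X / (l • Z) ∈ B :=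
      and_congr_right fun hl => by
        rw [← smul_setOf_eq_one hl hScone hπhom, ← image_smul, exists_mem_image]
    _ ↔ 0 < l ∧ (fun ω => X ω / l) ∈ mulSet B {Z | Z ∈ S ∧ π Z = 1} := by
      have hunit : ∀ Z ∈ {Z | Z ∈ S ∧ π Z = 1}, ∀ ω, Z ω ≠ 0 := fun Z hZ => hS0 Z hZ.1
      simp only [mem_mulSet_iff_exists_div_mem hunit, hdiv]

theorem marrm_reduction_lemma_general (hS0 : ∀ Z ∈ S, ∀ ω, Z ω ≠ 0)
    (hπpos : ∀ Z ∈ S, 0 < π Z) (hScone : ∀ r : ℝ, 0 < r → ∀ Z ∈ S, r • Z ∈ S)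
    (hπhom : ∀ r : ℝ, 0 < r → ∀ Z ∈ S, π (r • Z) = r * π Z) (B : Set (Ω → ℝ)) (X : Ω → ℝ) :
    marrm S B π X =
      sInf (ENNReal.ofReal ''
        {l : ℝ | 0 < l ∧ (fun ω => X ω / l) ∈ mulSet B {Z | Z ∈ S ∧ π Z = 1}}) := by
  rw [← image_setOf_div_mem_eq hS0 hπpos hScone hπhom, image_image]
  rfl

end

theorem marrm_reduction_lemma {Ω : Type*} [MeasurableSpace Ω] (P : Measure Ω) [IsProbabilityMeasure P]
    (C S K B : Set (Ω → ℝ)) (π : (Ω → ℝ) → ℝ)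
    (hCne : C.Nonempty) (hCpos : C ⊆ L0pos Ω)
    (hSne : S.Nonempty) (hSpos : S ⊆ L0pos Ω)
    (hπpos : ∀ Z ∈ S, 0 < π Z)
    (hKne : K.Nonempty) (hKpos : K ⊆ L0pos Ω)
    (hcompat : ∀ X ∈ C, ∀ Z ∈ S, (fun ω => X ω / Z ω) ∈ K)
    (hBne : B.Nonempty) (hBsub : B ⊆ K) (hBproper : B ≠ K)
    (hBmono : ∀ X ∈ B, ∀ Y ∈ K, (∀ᵐ ω ∂P, Y ω ≤ X ω) → Y ∈ B)
    (hScone : ∀ l : ℝ, 0 < l → ∀ Z ∈ S, (fun ω => l * Z ω) ∈ S)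
    (hπhom : ∀ l : ℝ, 0 < l → ∀ Z ∈ S, π (fun ω => l * Z ω) = l * π Z) :
    ∀ X ∈ C,
      marrm S B π X =
        sInf (ENNReal.ofReal ''
          {l : ℝ | 0 < l ∧ (fun ω => X ω / l) ∈ mulSet B {Z | Z ∈ S ∧ π Z = 1}}) :=
  fun X _ =>
    marrm_reduction_lemma_general (fun _ hZ ω => (hSpos hZ ω).ne') hπpos hScone hπhom B X
end

section
/- (Reduction lemma, part 2.) Let (B, S, π) be a return risk measurement regime. If S is a cone and π is positively homogeneous, then the set B·S_1 is monotone relative to C in the following sense: for all X ∈ B·S_1 and all Y ∈ C with Y ≤ X a.s., it holds that Y ∈ B·S_1. Here S_1 = {Z ∈ S : π(Z) = 1} and B·S_1 = {W·Z : W ∈ B, Z ∈ S_1}. -/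
open MeasureTheory Filter Set ENNReal

/-- `A` is monotone relative to `C`: every element of `C` dominated by an element of `A` lies
in `A`. Domination is eventual along a filter `l`; taking `l = ae P` gives the `P`-almost sure
order. -/
def MonotoneRel {Ω : Type*} (l : Filter Ω) (A C : Set (Ω → ℝ)) : Prop :=
  ∀ X ∈ A, ∀ Y ∈ C, (∀ᶠ ω in l, Y ω ≤ X ω) → Y ∈ A

theorem mem_mulSet_of_div_mem {Ω : Type*} {A D : Set (Ω → ℝ)} {Y Z : Ω → ℝ}
    (hZ : ∀ ω, Z ω ≠ 0) (hZD : Z ∈ D) (hYZ : Y / Z ∈ A) : Y ∈ mulSet A D :=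
  ⟨Y / Z, hYZ, Z, hZD, funext fun ω => (div_mul_cancel₀ (Y ω) (hZ ω)).symm⟩

theorem mulSet_monotone_general {Ω : Type*} {l : Filter Ω} {B C D K : Set (Ω → ℝ)}
    (hB : MonotoneRel l B K) (hDpos : D ⊆ L0pos Ω) (hcompat : ∀ X ∈ C, ∀ Z ∈ D, X / Z ∈ K) :
    MonotoneRel l (mulSet B D) C := by
  rintro _ ⟨W, hW, Z, hZ, rfl⟩ Y hY hYWZ
  have hZpos : ∀ ω, 0 < Z ω := hDpos hZ
  have hYZ_le : ∀ᶠ ω in l, (Y / Z) ω ≤ W ω :=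
    hYWZ.mono fun ω h => (div_le_iff₀ (hZpos ω)).2 h
  have hYZ : Y / Z ∈ B := hB W hW (Y / Z) (hcompat Y hY Z hZ) hYZ_le
  exact mem_mulSet_of_div_mem (fun ω => (hZpos ω).ne') hZ hYZ

theorem mulSet_monotone {Ω : Type*} [MeasurableSpace Ω] (P : Measure Ω) [IsProbabilityMeasure P]
    (C S K B : Set (Ω → ℝ)) (π : (Ω → ℝ) → ℝ)
    (hCne : C.Nonempty) (hCpos : C ⊆ L0pos Ω)
    (hSne : S.Nonempty) (hSpos : S ⊆ L0pos Ω)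
    (hπpos : ∀ Z ∈ S, 0 < π Z)
    (hKne : K.Nonempty) (hKpos : K ⊆ L0pos Ω)
    (hcompat : ∀ X ∈ C, ∀ Z ∈ S, (fun ω => X ω / Z ω) ∈ K)
    (hBne : B.Nonempty) (hBsub : B ⊆ K) (hBproper : B ≠ K)
    (hBmono : ∀ X ∈ B, ∀ Y ∈ K, (∀ᵐ ω ∂P, Y ω ≤ X ω) → Y ∈ B)
    (hScone : ∀ l : ℝ, 0 < l → ∀ Z ∈ S, (fun ω => l * Z ω) ∈ S)
    (hπhom : ∀ l : ℝ, 0 < l → ∀ Z ∈ S, π (fun ω => l * Z ω) = l * π Z) :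
    ∀ X ∈ mulSet B {Z | Z ∈ S ∧ π Z = 1}, ∀ Y ∈ C, (∀ᵐ ω ∂P, Y ω ≤ X ω) →
      Y ∈ mulSet B {Z | Z ∈ S ∧ π Z = 1} :=
  mulSet_monotone_general hBmono (fun _ hZ => hSpos hZ.1) fun X hX Z hZ => hcompat X hX Z hZ.1
end

section
/- Let (B, S, π) be a return risk measurement regime with associated MARRM η. Assume that the sets C, B and S are log-star-shaped and that π is log-star-shaped. Then η is log-star-shaped: for all α ∈ (0,1) and all X ∈ C, η(X^α) ≤ η(X)^α (powers computed in [0,∞] with (+∞)^α = +∞). -/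
/-!
If `X / Z` is acceptable, so is its power `X ^ a / Z ^ a`: every security `Z` admissible for `X`
yields the security `Z ^ a` admissible for `X ^ a`, at a price of at most `π Z ^ a`. As `t ↦ t ^ a`
is an order isomorphism of `[0, ∞]` for `a > 0`, it commutes with the infimum over `Z`.
-/

open MeasureTheory Filter Set ENNReal

/-- The admissible securities for a position `X`: the `Z ∈ S` whose relative loss `X / Z` is
acceptable, so that `marrm S B π X` is the infimum of `π` over this set. -/
def admissibleSecurities {Ω : Type*} (S B : Set (Ω → ℝ)) (X : Ω → ℝ) : Set (Ω → ℝ) :=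
  {Z | Z ∈ S ∧ (fun ω => X ω / Z ω) ∈ B}

section

variable {Ω : Type*} {S B : Set (Ω → ℝ)} {π : (Ω → ℝ) → ℝ} {X Z : Ω → ℝ} {a : ℝ}

theorem marrm_le_ofReal (hZ : Z ∈ admissibleSecurities S B X) :
    marrm S B π X ≤ ENNReal.ofReal (π Z) :=
  sInf_le (mem_image_of_mem _ hZ)

theorem le_marrm_iff {b : ℝ≥0∞} :
    b ≤ marrm S B π X ↔ ∀ Z ∈ admissibleSecurities S B X, b ≤ ENNReal.ofReal (π Z) :=
  le_sInf_iff.trans forall_mem_image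

theorem le_marrm_rpow_iff (ha : 0 < a) {b : ℝ≥0∞} :
    b ≤ marrm S B π X ^ a ↔
      ∀ Z ∈ admissibleSecurities S B X, b ≤ ENNReal.ofReal (π Z) ^ a := by
  simp only [← ENNReal.rpow_inv_le_iff ha, le_marrm_iff]

theorem rpow_mem_admissibleSecurities (hX : ∀ ω, 0 ≤ X ω) (hSpos : S ⊆ L0pos Ω)
    (hS : ∀ Z ∈ S, (fun ω => Z ω ^ a) ∈ S) (hB : ∀ Y ∈ B, (fun ω => Y ω ^ a) ∈ B)
    (hZ : Z ∈ admissibleSecurities S B X) :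
    (fun ω => Z ω ^ a) ∈ admissibleSecurities S B (fun ω => X ω ^ a) := by
  obtain ⟨hZS, hXZ⟩ := hZ
  have div_rpow : (fun ω => (X ω / Z ω) ^ a) = fun ω => X ω ^ a / Z ω ^ a :=
    funext fun ω => Real.div_rpow (hX ω) (hSpos hZS ω).le a
  exact ⟨hS Z hZS, div_rpow ▸ hB _ hXZ⟩

theorem marrm_log_star_shaped_general (ha : 0 < a) (hX : ∀ ω, 0 ≤ X ω) (hSpos : S ⊆ L0pos Ω)
    (hπ_nonneg : ∀ Z ∈ S, 0 ≤ π Z)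
    (hS : ∀ Z ∈ S, (fun ω => Z ω ^ a) ∈ S) (hB : ∀ Y ∈ B, (fun ω => Y ω ^ a) ∈ B)
    (hπ : ∀ Z ∈ S, π (fun ω => Z ω ^ a) ≤ π Z ^ a) :
    marrm S B π (fun ω => X ω ^ a) ≤ marrm S B π X ^ a := by
  refine (le_marrm_rpow_iff ha).2 fun Z hZ => ?_
  calc marrm S B π (fun ω => X ω ^ a)
      ≤ ENNReal.ofReal (π fun ω => Z ω ^ a) :=
        marrm_le_ofReal (rpow_mem_admissibleSecurities hX hSpos hS hB hZ)
    _ ≤ ENNReal.ofReal (π Z ^ a) := ENNReal.ofReal_le_ofReal (hπ Z hZ.1)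
    _ = ENNReal.ofReal (π Z) ^ a :=
        (ENNReal.ofReal_rpow_of_nonneg (hπ_nonneg Z hZ.1) ha.le).symm

end

theorem marrm_log_star_shaped {Ω : Type*} [MeasurableSpace Ω] (P : Measure Ω) [IsProbabilityMeasure P]
    (C S K B : Set (Ω → ℝ)) (π : (Ω → ℝ) → ℝ)
    (hCne : C.Nonempty) (hCpos : C ⊆ L0pos Ω)
    (hSne : S.Nonempty) (hSpos : S ⊆ L0pos Ω)
    (hπpos : ∀ Z ∈ S, 0 < π Z)
    (hKne : K.Nonempty) (hKpos : K ⊆ L0pos Ω)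
    (hcompat : ∀ X ∈ C, ∀ Z ∈ S, (fun ω => X ω / Z ω) ∈ K)
    (hBne : B.Nonempty) (hBsub : B ⊆ K) (hBproper : B ≠ K)
    (hBmono : ∀ X ∈ B, ∀ Y ∈ K, (∀ᵐ ω ∂P, Y ω ≤ X ω) → Y ∈ B)
    (hClss : ∀ a ∈ Set.Ioo (0:ℝ) 1, ∀ X ∈ C, (fun ω => X ω ^ a) ∈ C)
    (hBlss : ∀ a ∈ Set.Ioo (0:ℝ) 1, ∀ X ∈ B, (fun ω => X ω ^ a) ∈ B)
    (hSlss : ∀ a ∈ Set.Ioo (0:ℝ) 1, ∀ Z ∈ S, (fun ω => Z ω ^ a) ∈ S)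
    (hπlss : ∀ a ∈ Set.Ioo (0:ℝ) 1, ∀ Z ∈ S, π (fun ω => Z ω ^ a) ≤ π Z ^ a) :
    ∀ a ∈ Set.Ioo (0:ℝ) 1, ∀ X ∈ C,
      marrm S B π (fun ω => X ω ^ a) ≤ marrm S B π X ^ a :=
  fun a ha _ hX => marrm_log_star_shaped_general ha.1 (fun ω => (hCpos hX ω).le) hSpos
    (fun Z hZ => (hπpos Z hZ).le) (hSlss a ha) (hBlss a ha) (hπlss a ha)
end

section
/- Let (B, S, π) be a return risk measurement regime with associated MARRM η. Assume that the sets C, B and S are logconvex and that π is quasi-logconvex. Then η is quasi-logconvex: for all X, Y ∈ C and α ∈ (0,1), η(X^α Y^{1−α}) ≤ max{η(X), η(Y)}. -/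
open MeasureTheory Filter Set ENNReal

/-!
Weighted geometric means commute with quotients of nonnegative random variables. Hence, if `Z` makes
`X` acceptable and `W` makes `Y` acceptable, then the geometric mean of `Z` and `W` makes the
geometric mean of `X` and `Y` acceptable, at a price of at most `max (π Z) (π W)`. Taking the infimum
over `Z` and `W` gives the claim, because in a chain `⊔` distributes over infima.
-/

section GeometricMean

variable {Ω β γ : Type*}

/-- The weighted pointwise geometric mean `X ^ a * Y ^ (1 - a)` of two random variables, meaningful
for nonnegative `X` and `Y`; the weight `a` is an arbitrary real number. -/
noncomputable def geomMean (a : ℝ) (X Y : Ω → ℝ) : Ω → ℝ :=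
  fun ω => X ω ^ a * Y ω ^ (1 - a)

/-- Logconvexity of a set of random variables: closure under geometric means with weights in
`(0, 1)`. -/
def LogConvex (D : Set (Ω → ℝ)) : Prop :=
  ∀ X ∈ D, ∀ Y ∈ D, ∀ a ∈ Ioo (0 : ℝ) 1, geomMean a X Y ∈ D

/-- Quasi-logconvexity on `D` of a map `f` on random variables. The codomain is arbitrary, so that
the notion covers both real-valued pricing maps and `ℝ≥0∞`-valued risk measures; `D` itself need not
be logconvex. -/
def QuasiLogConvexOn [LE β] [Max β] (D : Set (Ω → ℝ)) (f : (Ω → ℝ) → β) : Prop :=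
  ∀ X ∈ D, ∀ Y ∈ D, ∀ a ∈ Ioo (0 : ℝ) 1, f (geomMean a X Y) ≤ max (f X) (f Y)

theorem geomMean_div_div {X Y Z W : Ω → ℝ} (hX : 0 ≤ X) (hY : 0 ≤ Y) (hZ : 0 ≤ Z) (hW : 0 ≤ W)
    (a : ℝ) : geomMean a (X / Z) (Y / W) = geomMean a X Y / geomMean a Z W := by
  funext ω
  calc (X ω / Z ω) ^ a * (Y ω / W ω) ^ (1 - a)
      = X ω ^ a / Z ω ^ a * (Y ω ^ (1 - a) / W ω ^ (1 - a)) := by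
        rw [Real.div_rpow (hX ω) (hZ ω), Real.div_rpow (hY ω) (hW ω)]
    _ = X ω ^ a * Y ω ^ (1 - a) / (Z ω ^ a * W ω ^ (1 - a)) := div_mul_div_comm _ _ _ _

theorem QuasiLogConvexOn.monotone_comp [LinearOrder β] [LinearOrder γ] {D : Set (Ω → ℝ)}
    {f : (Ω → ℝ) → β} {g : β → γ} (hg : Monotone g) (hf : QuasiLogConvexOn D f) :
    QuasiLogConvexOn D (g ∘ f) := fun X hX Y hY a ha =>
  (hg (hf X hX Y hY a ha)).trans_eq hg.map_max

end GeometricMean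

theorem sInf_image_le_sup_sInf_image {α β : Type*} [Order.Coframe β] {f : α → β} {s t u : Set α}
    (h : ∀ x ∈ s, ∀ y ∈ t, ∃ z ∈ u, f z ≤ f x ⊔ f y) :
    sInf (f '' u) ≤ sInf (f '' s) ⊔ sInf (f '' t) := by
  rw [sInf_sup_sInf]
  refine le_iInf₂ ?_
  rintro ⟨_, _⟩ ⟨⟨x, hx, rfl⟩, ⟨y, hy, rfl⟩⟩
  obtain ⟨z, hz, hle⟩ := h x hx y hy
  exact (sInf_le (mem_image_of_mem f hz)).trans hle

section Marrm

variable {Ω : Type*} {S B : Set (Ω → ℝ)} {π : (Ω → ℝ) → ℝ}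

/-- The securities in `S` that make `X` acceptable relative to `B`: the feasible set of the
minimization problem that defines `marrm S B π X`. -/
def acceptableSecurities (S B : Set (Ω → ℝ)) (X : Ω → ℝ) : Set (Ω → ℝ) :=
  {Z | Z ∈ S ∧ X / Z ∈ B}

theorem geomMean_mem_acceptableSecurities (hS : LogConvex S) (hB : LogConvex B)
    {X Y Z W : Ω → ℝ} (hX : 0 ≤ X) (hY : 0 ≤ Y) (hZ : 0 ≤ Z) (hW : 0 ≤ W)
    (hZX : Z ∈ acceptableSecurities S B X) (hWY : W ∈ acceptableSecurities S B Y)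
    {a : ℝ} (ha : a ∈ Ioo (0 : ℝ) 1) :
    geomMean a Z W ∈ acceptableSecurities S B (geomMean a X Y) := by
  refine ⟨hS Z hZX.1 W hWY.1 a ha, ?_⟩
  rw [← geomMean_div_div hX hY hZ hW]
  exact hB _ hZX.2 _ hWY.2 a ha

theorem marrm_quasi_logconvex_general (hSpos : S ⊆ L0pos Ω) (hS : LogConvex S)
    (hB : LogConvex B) (hπ : QuasiLogConvexOn S π) :
    QuasiLogConvexOn {X | 0 ≤ X} (marrm S B π) := by
  intro X hX Y hY a ha
  have S_nonneg : ∀ Z ∈ S, 0 ≤ Z := fun Z hZ ω => (hSpos hZ ω).le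
  refine sInf_image_le_sup_sInf_image (s := acceptableSecurities S B X)
    (t := acceptableSecurities S B Y) fun Z hZ W hW => ⟨geomMean a Z W, ?_, ?_⟩
  · exact geomMean_mem_acceptableSecurities hS hB hX hY (S_nonneg Z hZ.1) (S_nonneg W hW.1) hZ hW ha
  · exact hπ.monotone_comp ENNReal.ofReal_mono Z hZ.1 W hW.1 a ha

end Marrm

theorem marrm_quasi_logconvex {Ω : Type*} [MeasurableSpace Ω] (P : Measure Ω) [IsProbabilityMeasure P]
    (C S K B : Set (Ω → ℝ)) (π : (Ω → ℝ) → ℝ)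
    (hCne : C.Nonempty) (hCpos : C ⊆ L0pos Ω)
    (hSne : S.Nonempty) (hSpos : S ⊆ L0pos Ω)
    (hπpos : ∀ Z ∈ S, 0 < π Z)
    (hKne : K.Nonempty) (hKpos : K ⊆ L0pos Ω)
    (hcompat : ∀ X ∈ C, ∀ Z ∈ S, (fun ω => X ω / Z ω) ∈ K)
    (hBne : B.Nonempty) (hBsub : B ⊆ K) (hBproper : B ≠ K)
    (hBmono : ∀ X ∈ B, ∀ Y ∈ K, (∀ᵐ ω ∂P, Y ω ≤ X ω) → Y ∈ B)
    (hClc : ∀ X ∈ C, ∀ Y ∈ C, ∀ a ∈ Set.Ioo (0:ℝ) 1,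
      (fun ω => X ω ^ a * Y ω ^ (1 - a)) ∈ C)
    (hBlc : ∀ X ∈ B, ∀ Y ∈ B, ∀ a ∈ Set.Ioo (0:ℝ) 1,
      (fun ω => X ω ^ a * Y ω ^ (1 - a)) ∈ B)
    (hSlc : ∀ Z1 ∈ S, ∀ Z2 ∈ S, ∀ a ∈ Set.Ioo (0:ℝ) 1,
      (fun ω => Z1 ω ^ a * Z2 ω ^ (1 - a)) ∈ S)
    (hπqlc : ∀ Z1 ∈ S, ∀ Z2 ∈ S, ∀ a ∈ Set.Ioo (0:ℝ) 1,
      π (fun ω => Z1 ω ^ a * Z2 ω ^ (1 - a)) ≤ max (π Z1) (π Z2)) :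
    ∀ X ∈ C, ∀ Y ∈ C, ∀ a ∈ Set.Ioo (0:ℝ) 1,
      marrm S B π (fun ω => X ω ^ a * Y ω ^ (1 - a))
        ≤ max (marrm S B π X) (marrm S B π Y) := by
  intro X hX Y hY
  exact marrm_quasi_logconvex_general hSpos hSlc hBlc hπqlc
    X (fun ω => (hCpos hX ω).le) Y (fun ω => (hCpos hY ω).le)
end

section
/- Let (B, S, π) be a return risk measurement regime with associated MARRM η. Suppose C = L^∞_{++}, that the constant random variable 1 belongs to B, and that there exists U ∈ int(L^∞_+) such that λU ∈ S for every λ > 0. Then η(X) < ∞ for every X ∈ C. -/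
open MeasureTheory Filter Set ENNReal

/-- `L^∞₊₊`: strictly positive, (essentially) bounded random variables. -/
def LinftyPos {Ω : Type*} [MeasurableSpace Ω] (P : Measure Ω) : Set (Ω → ℝ) :=
  {X | (∀ ω, 0 < X ω) ∧ ∃ c : ℝ, ∀ᵐ ω ∂P, X ω ≤ c}

/-- `int(L^∞₊)`: bounded random variables that are a.s. bounded below by a
positive constant. -/
def intLinftyPlus {Ω : Type*} [MeasurableSpace Ω] (P : Measure Ω) : Set (Ω → ℝ) :=
  {X | (∃ c : ℝ, ∀ᵐ ω ∂P, |X ω| ≤ c) ∧ ∃ ε : ℝ, 0 < ε ∧ ∀ᵐ ω ∂P, ε ≤ X ω}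

/-!
If `X ≤ c` and `Z ≥ max 1 (c / δ)` a.s., then `X / Z ≤ δ` a.s. By monotonicity, `X / Z` is then
acceptable as soon as some acceptable loss is at least `δ > 0`. Large multiples of a security
bounded away from zero provide such a `Z`, and its price bounds the risk of `X`.
-/

theorem marrm_lt_top_iff {Ω : Type*} {S B : Set (Ω → ℝ)} {π : (Ω → ℝ) → ℝ} {X : Ω → ℝ} :
    marrm S B π X < ⊤ ↔ ∃ Z ∈ S, (fun ω => X ω / Z ω) ∈ B := by
  simp [marrm, sInf_lt_iff, and_assoc]

theorem exists_mem_eventually_le_of_pos_mul_mem {Ω : Type*} {f : Filter Ω} {S : Set (Ω → ℝ)}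
    {U : Ω → ℝ} {ε : ℝ} (hε : 0 < ε) (hεU : ∀ᶠ ω in f, ε ≤ U ω)
    (hUS : ∀ l : ℝ, 0 < l → (fun ω => l * U ω) ∈ S) (r : ℝ) :
    ∃ Z ∈ S, ∀ᶠ ω in f, r ≤ Z ω := by
  have hl : 0 < max 1 (r / ε) := lt_max_of_lt_left one_pos
  refine ⟨_, hUS _ hl, ?_⟩
  filter_upwards [hεU] with ω hω
  calc r ≤ max 1 (r / ε) * ε := (div_le_iff₀ hε).1 (le_max_right _ _)
    _ ≤ max 1 (r / ε) * U ω := by gcongr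

theorem div_le_of_le_of_max_one_div_le {𝕜 : Type*} [Field 𝕜] [LinearOrder 𝕜]
    [IsStrictOrderedRing 𝕜] {x z c δ : 𝕜} (hδ : 0 < δ) (hx : x ≤ c) (hz : max 1 (c / δ) ≤ z) :
    x / z ≤ δ := by
  obtain ⟨one_le_z, hcz⟩ := max_le_iff.1 hz
  have hz_pos : 0 < z := one_pos.trans_le one_le_z
  exact (div_le_iff₀ hz_pos).2 (hx.trans ((div_le_iff₀' hδ).1 hcz))

theorem marrm_finite_of_Linfty_general {Ω : Type*} [MeasurableSpace Ω] {P : Measure Ω}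
    {C S K B : Set (Ω → ℝ)} {π : (Ω → ℝ) → ℝ} {V : Ω → ℝ}
    (hcompat : ∀ X ∈ C, ∀ Z ∈ S, (fun ω => X ω / Z ω) ∈ K)
    (hBmono : ∀ X ∈ B, ∀ Y ∈ K, (∀ᵐ ω ∂P, Y ω ≤ X ω) → Y ∈ B)
    (hVB : V ∈ B) (hV : ∃ δ : ℝ, 0 < δ ∧ ∀ᵐ ω ∂P, δ ≤ V ω)
    (hS : ∀ r : ℝ, ∃ Z ∈ S, ∀ᵐ ω ∂P, r ≤ Z ω) :
    ∀ X ∈ C, (∃ c : ℝ, ∀ᵐ ω ∂P, X ω ≤ c) → marrm S B π X < ⊤ := by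
  rintro X hX ⟨c, hXc⟩
  obtain ⟨δ, hδ, hδV⟩ := hV
  obtain ⟨Z, hZS, hZ⟩ := hS (max 1 (c / δ))
  refine marrm_lt_top_iff.2 ⟨Z, hZS, hBmono V hVB _ (hcompat X hX Z hZS) ?_⟩
  filter_upwards [hXc, hZ, hδV] with ω hXω hZω hVω
  exact (div_le_of_le_of_max_one_div_le hδ hXω hZω).trans hVω

theorem marrm_finite_of_Linfty {Ω : Type*} [MeasurableSpace Ω] (P : Measure Ω) [IsProbabilityMeasure P]
    (C S K B : Set (Ω → ℝ)) (π : (Ω → ℝ) → ℝ)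
    (hCne : C.Nonempty) (hCpos : C ⊆ L0pos Ω)
    (hSne : S.Nonempty) (hSpos : S ⊆ L0pos Ω)
    (hπpos : ∀ Z ∈ S, 0 < π Z)
    (hKne : K.Nonempty) (hKpos : K ⊆ L0pos Ω)
    (hcompat : ∀ X ∈ C, ∀ Z ∈ S, (fun ω => X ω / Z ω) ∈ K)
    (hBne : B.Nonempty) (hBsub : B ⊆ K) (hBproper : B ≠ K)
    (hBmono : ∀ X ∈ B, ∀ Y ∈ K, (∀ᵐ ω ∂P, Y ω ≤ X ω) → Y ∈ B)
    (hCeq : C = LinftyPos P)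
    (hone : (fun _ => (1:ℝ)) ∈ B)
    (hU : ∃ U ∈ intLinftyPlus P, ∀ l : ℝ, 0 < l → (fun ω => l * U ω) ∈ S) :
    ∀ X ∈ C, marrm S B π X < ⊤ := by
  obtain ⟨U, ⟨_, ε, hε, hεU⟩, hUS⟩ := hU
  exact fun X hX => marrm_finite_of_Linfty_general hcompat hBmono hone
    ⟨1, one_pos, .of_forall fun _ => le_rfl⟩
    (exists_mem_eventually_le_of_pos_mul_mem hε hεU hUS) X hX (hCeq.subset hX).2
end

section
/- (Representation of a MARRM through a MARM.) In the RRM setting, let η be the MARRM associated with the return risk measurement regime (B_ρ̃, S, π) and let ρ be the associated MARM. Then for every X ∈ C one has η(X) = exp(ρ(log X)), where exp : [−∞,∞] → [0,∞] is extended by exp(−∞) = 0 and exp(+∞) = +∞. -/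
open MeasureTheory Filter Set ENNReal

/-- The image of a set of random variables under the pointwise logarithm,
e.g. `C_log = {log X : X ∈ C}`. -/
def logIm {Ω : Type*} (A : Set (Ω → ℝ)) : Set (Ω → ℝ) :=
  (fun X => fun ω => Real.log (X ω)) '' A

/-- The multi-asset risk measure (MARM) with security set `Slog`, acceptance set `Anu`
and pricing map `πlog`: `ρ(Y) = inf {πlog(L) : L ∈ Slog, Y - L ∈ Anu}`, with
values in `[-∞,∞]` and `inf ∅ = +∞`. -/
noncomputable def marm {Ω : Type*} (Slog Anu : Set (Ω → ℝ)) (πlog : (Ω → ℝ) → ℝ)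
    (Y : Ω → ℝ) : EReal :=
  sInf ((fun L => (πlog L : EReal)) '' {L | L ∈ Slog ∧ (fun ω => Y ω - L ω) ∈ Anu})

/-- The relative acceptance set `B_ρ̃ = {X ∈ K : ρ̃(X) ≤ 1}` induced by a
return risk measure `ρt` on `K`. -/
def rrmAccept {Ω : Type*} (K : Set (Ω → ℝ)) (ρt : (Ω → ℝ) → ℝ) : Set (Ω → ℝ) :=
  {X | X ∈ K ∧ ρt X ≤ 1}

/-- The MARM associated with a return risk measurement regime `(B_ρ̃, S, π)` in the
RRM setting: security set `S_log`, acceptance set `A_ν = {Y ∈ K_log : ν(Y) ≤ 0}` with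
`ν = log ∘ ρ̃ ∘ exp`, and pricing map `π_log = log ∘ π ∘ exp`. -/
noncomputable def marmOf {Ω : Type*} (S K : Set (Ω → ℝ)) (π ρt : (Ω → ℝ) → ℝ) :
    (Ω → ℝ) → EReal :=
  marm (logIm S) {L | L ∈ logIm K ∧ Real.log (ρt (fun ω => Real.exp (L ω))) ≤ 0}
    (fun L => Real.log (π (fun ω => Real.exp (L ω))))

/-- The extension of `exp` to `[-∞,∞] → [0,∞]` with `exp(-∞) = 0`, `exp(+∞) = +∞`. -/
noncomputable def expE (x : EReal) : ℝ≥0∞ :=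
  if x = ⊥ then 0 else if x = ⊤ then ⊤ else ENNReal.ofReal (Real.exp x.toReal)

/-!
On strictly positive random variables `exp` inverts the pointwise logarithm and turns differences
into quotients, so the logarithm carries the acceptance set `B_ρ̃` onto `A_ν`, and the securities
`Z ∈ S` with `X / Z ∈ B_ρ̃` onto the `L ∈ S_log` with `log X - L ∈ A_ν`. The extended exponential
is an order isomorphism `[-∞, ∞] ≃ [0, ∞]`, hence commutes with the infimum of the prices.
-/

theorem expE_eq_exp (x : EReal) : expE x = EReal.exp x := by
  induction x using EReal.rec <;> simp [expE]

theorem expE_coe_log {a : ℝ} (ha : 0 < a) : expE (Real.log a) = ENNReal.ofReal a := by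
  rw [expE_eq_exp, EReal.exp_coe, Real.exp_log ha]

theorem expE_sInf (s : Set EReal) : expE (sInf s) = sInf (expE '' s) := by
  rw [funext expE_eq_exp, sInf_image]
  exact logOrderIso.symm.map_sInf s

section

variable {Ω : Type*}

theorem exp_log_of_mem_L0pos {X : Ω → ℝ} (hX : X ∈ L0pos Ω) :
    (fun ω => Real.exp (Real.log (X ω))) = X :=
  funext fun ω => Real.exp_log (hX ω)

theorem mem_logIm_iff {A : Set (Ω → ℝ)} (hA : A ⊆ L0pos Ω) {L : Ω → ℝ} :
    L ∈ logIm A ↔ (fun ω => Real.exp (L ω)) ∈ A := by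
  constructor
  · rintro ⟨X, hX, rfl⟩
    rwa [exp_log_of_mem_L0pos (hA hX)]
  · exact fun hL => ⟨_, hL, funext fun ω => Real.log_exp (L ω)⟩

theorem logIm_rrmAccept {K : Set (Ω → ℝ)} {ρt : (Ω → ℝ) → ℝ} (hKpos : K ⊆ L0pos Ω)
    (hρpos : ∀ X ∈ K, 0 < ρt X) :
    logIm (rrmAccept K ρt) =
      {L | L ∈ logIm K ∧ Real.log (ρt fun ω => Real.exp (L ω)) ≤ 0} := by
  ext L
  rw [mem_logIm_iff fun X hX => hKpos hX.1, mem_ofPred_eq, mem_logIm_iff hKpos]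
  exact and_congr_right fun hL => (Real.log_nonpos_iff (hρpos _ hL).le).symm

theorem logIm_mem_and_div_mem {S B : Set (Ω → ℝ)} (hSpos : S ⊆ L0pos Ω) (hBpos : B ⊆ L0pos Ω)
    {X : Ω → ℝ} (hX : X ∈ L0pos Ω) :
    logIm {Z | Z ∈ S ∧ (fun ω => X ω / Z ω) ∈ B} =
      {L | L ∈ logIm S ∧ (fun ω => Real.log (X ω) - L ω) ∈ logIm B} := by
  ext L
  have exp_log_sub : (fun ω => Real.exp (Real.log (X ω) - L ω)) =
      fun ω => X ω / Real.exp (L ω) :=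
    funext fun ω => by rw [Real.exp_sub, Real.exp_log (hX ω)]
  rw [mem_logIm_iff fun Z hZ => hSpos hZ.1, mem_ofPred_eq, mem_ofPred_eq, mem_logIm_iff hSpos,
    mem_logIm_iff hBpos, exp_log_sub]

theorem marrm_eq_expE_marm_logIm {S B : Set (Ω → ℝ)} {π : (Ω → ℝ) → ℝ}
    (hSpos : S ⊆ L0pos Ω) (hπpos : ∀ Z ∈ S, 0 < π Z) (hBpos : B ⊆ L0pos Ω)
    {X : Ω → ℝ} (hX : X ∈ L0pos Ω) :
    marrm S B π X =
      expE (marm (logIm S) (logIm B) (fun L => Real.log (π fun ω => Real.exp (L ω)))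
        fun ω => Real.log (X ω)) := by
  have price_eq : ∀ Z ∈ S, ENNReal.ofReal (π Z) =
      expE (Real.log (π fun ω => Real.exp (Real.log (Z ω)))) := fun Z hZ => by
    rw [exp_log_of_mem_L0pos (hSpos hZ), expE_coe_log (hπpos Z hZ)]
  rw [marrm, marm, expE_sInf, ← logIm_mem_and_div_mem hSpos hBpos hX, logIm, image_image,
    image_image]
  exact congrArg sInf (image_congr fun Z hZ => price_eq Z hZ.1)

theorem marrm_eq_exp_marm_log_general {S K : Set (Ω → ℝ)} {π ρt : (Ω → ℝ) → ℝ}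
    (hSpos : S ⊆ L0pos Ω) (hπpos : ∀ Z ∈ S, 0 < π Z) (hKpos : K ⊆ L0pos Ω)
    (hρpos : ∀ X ∈ K, 0 < ρt X) {X : Ω → ℝ} (hX : X ∈ L0pos Ω) :
    marrm S (rrmAccept K ρt) π X =
      expE (marmOf S K π ρt fun ω => Real.log (X ω)) := by
  rw [marmOf, ← logIm_rrmAccept hKpos hρpos]
  exact marrm_eq_expE_marm_logIm hSpos hπpos (fun Y hY => hKpos hY.1) hX

end

theorem marrm_eq_exp_marm_log {Ω : Type*} [MeasurableSpace Ω] (P : Measure Ω) [IsProbabilityMeasure P]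
    (C S K : Set (Ω → ℝ)) (π ρt : (Ω → ℝ) → ℝ)
    (hCne : C.Nonempty) (hCpos : C ⊆ L0pos Ω)
    (hSne : S.Nonempty) (hSpos : S ⊆ L0pos Ω)
    (hπpos : ∀ Z ∈ S, 0 < π Z)
    (hKne : K.Nonempty) (hKpos : K ⊆ L0pos Ω)
    (hKcone : ∀ l : ℝ, 0 < l → ∀ X ∈ K, (fun ω => l * X ω) ∈ K)
    (hKinf : LinftyPos P ⊆ K)
    (hcompat : ∀ X ∈ C, ∀ Z ∈ S, (fun ω => X ω / Z ω) ∈ K)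
    (hCmul : ∀ X ∈ C, ∀ Y ∈ C, (fun ω => X ω * Y ω) ∈ C)
    (hCone : (fun _ => (1:ℝ)) ∈ C)
    (hCinv : ∀ X ∈ C, (fun ω => (X ω)⁻¹) ∈ C)
    (hρmono : ∀ X ∈ K, ∀ Y ∈ K, (∀ᵐ ω ∂P, X ω ≤ Y ω) → ρt X ≤ ρt Y)
    (hρhom : ∀ l : ℝ, 0 < l → ∀ X ∈ K, ρt (fun ω => l * X ω) = l * ρt X)
    (hρpos : ∀ X ∈ K, 0 < ρt X)
    (hρone : ρt (fun _ => (1:ℝ)) = 1)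
    : ∀ X ∈ C,
      marrm S (rrmAccept K ρt) π X
        = expE (marmOf S K π ρt (fun ω => Real.log (X ω))) := by
  exact fun X hX => marrm_eq_exp_marm_log_general hSpos hπpos hKpos hρpos (hCpos hX)
end

section
/- In the RRM setting, suppose additionally that C is a cone (λC ⊆ C for all λ > 0). Then the MARRM η is positively homogeneous (η(λX) = λ·η(X) for all λ > 0 and X ∈ C, with λ·(+∞) = +∞) if and only if the associated MARM ρ is cash-additive, i.e., ρ(Y + r) = ρ(Y) + r for all Y ∈ C_log and r ∈ ℝ (extended-real arithmetic). -/
open MeasureTheory Filter Set ENNReal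

/-!
The logarithm is an order isomorphism `[0, ∞] ≃ [-∞, ∞]`, so it commutes with infima, and it turns
quotients into differences. Hence `ρ (log X) = log (η X)` for strictly positive `X`. As it also
turns multiplication by `exp r` into addition of `r`, positive homogeneity of `η` at `X` and
cash-additivity of `ρ` at `log X` are the same identity.
-/

/-- The logarithmic conjugate `log ∘ φ ∘ exp` of a map `φ` on random variables. It gives both the
pricing map `π_log = logConj π` and the risk measure `ν = logConj ρ̃`. As in `marmOf`, it is total
on `Ω → ℝ` and meaningful only where `φ ∘ exp` is positive. -/
noncomputable def logConj {Ω : Type*} (φ : (Ω → ℝ) → ℝ) (Y : Ω → ℝ) : ℝ :=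
  Real.log (φ fun ω => Real.exp (Y ω))

section

variable {Ω : Type*} {A B C K S : Set (Ω → ℝ)} {X : Ω → ℝ} {π ρt : (Ω → ℝ) → ℝ}

theorem logConj_log (φ : (Ω → ℝ) → ℝ) (hX : X ∈ L0pos Ω) :
    logConj φ (fun ω => Real.log (X ω)) = Real.log (φ X) := by
  simp only [logConj, Real.exp_log (hX _)]

theorem injOn_log_L0pos : InjOn (fun X : Ω → ℝ => fun ω => Real.log (X ω)) (L0pos Ω) :=
  fun _ hX _ hY h => funext fun ω => Real.log_injOn_pos (hX ω) (hY ω) (congrFun h ω)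

theorem log_mem_logIm_iff (hA : A ⊆ L0pos Ω) (hX : X ∈ L0pos Ω) :
    (fun ω => Real.log (X ω)) ∈ logIm A ↔ X ∈ A :=
  injOn_log_L0pos.mem_image_iff hA hX

theorem logIm_sep_div_mem (hS : S ⊆ L0pos Ω) (hB : B ⊆ L0pos Ω) (hX : X ∈ L0pos Ω) :
    logIm {Z ∈ S | (fun ω => X ω / Z ω) ∈ B} =
      {L ∈ logIm S | (fun ω => Real.log (X ω) - L ω) ∈ logIm B} := by
  have log_sub_mem_iff : ∀ Z ∈ S,
      (fun ω => Real.log (X ω) - Real.log (Z ω)) ∈ logIm B ↔ (fun ω => X ω / Z ω) ∈ B := by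
    intro Z hZ
    simp only [← Real.log_div (hX _).ne' (hS hZ _).ne']
    exact log_mem_logIm_iff hB fun ω => div_pos (hX ω) (hS hZ ω)
  ext L
  constructor
  · rintro ⟨Z, ⟨hZ, hXZ⟩, rfl⟩
    exact ⟨mem_image_of_mem _ hZ, (log_sub_mem_iff Z hZ).2 hXZ⟩
  · rintro ⟨⟨Z, hZ, rfl⟩, hXZ⟩
    exact mem_image_of_mem _ ⟨hZ, (log_sub_mem_iff Z hZ).1 hXZ⟩

theorem logIm_rrmAccept_s14 (hK : K ⊆ L0pos Ω) (hρ : ∀ X ∈ K, 0 < ρt X) :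
    logIm (rrmAccept K ρt) = {Y ∈ logIm K | logConj ρt Y ≤ 0} := by
  have logConj_nonpos_iff : ∀ X ∈ K, logConj ρt (fun ω => Real.log (X ω)) ≤ 0 ↔ ρt X ≤ 1 := by
    intro X hX
    rw [logConj_log ρt (hK hX), Real.log_nonpos_iff (hρ X hX).le]
  ext Y
  constructor
  · rintro ⟨X, ⟨hX, hρX⟩, rfl⟩
    exact ⟨mem_image_of_mem _ hX, (logConj_nonpos_iff X hX).2 hρX⟩
  · rintro ⟨⟨X, hX, rfl⟩, hνX⟩
    exact mem_image_of_mem _ ⟨hX, (logConj_nonpos_iff X hX).1 hνX⟩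

theorem marmOf_eq_marm (S : Set (Ω → ℝ)) (π : (Ω → ℝ) → ℝ) (hK : K ⊆ L0pos Ω)
    (hρ : ∀ X ∈ K, 0 < ρt X) :
    marmOf S K π ρt = marm (logIm S) (logIm (rrmAccept K ρt)) (logConj π) := by
  rw [logIm_rrmAccept_s14 hK hρ]
  rfl

theorem marm_log_eq_log_marrm (hS : S ⊆ L0pos Ω) (hB : B ⊆ L0pos Ω) (hπ : ∀ Z ∈ S, 0 < π Z)
    (hX : X ∈ L0pos Ω) :
    marm (logIm S) (logIm B) (logConj π) (fun ω => Real.log (X ω)) =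
      ENNReal.log (marrm S B π X) := by
  set D := {Z ∈ S | (fun ω => X ω / Z ω) ∈ B}
  have log_price : ∀ Z ∈ D, (logConj π (fun ω => Real.log (Z ω)) : EReal) =
      ENNReal.log (ENNReal.ofReal (π Z)) := by
    rintro Z ⟨hZ, -⟩
    rw [logConj_log π (hS hZ), ENNReal.log_ofReal_of_pos (hπ Z hZ)]
  calc marm (logIm S) (logIm B) (logConj π) (fun ω => Real.log (X ω))
      = sInf ((fun L => (logConj π L : EReal)) '' logIm D) := by
        rw [logIm_sep_div_mem hS hB hX, marm]
    _ = ⨅ Z ∈ D, (logConj π (fun ω => Real.log (Z ω)) : EReal) := by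
        rw [logIm, image_image, sInf_image]
    _ = ⨅ Z ∈ D, ENNReal.logOrderIso (ENNReal.ofReal (π Z)) := biInf_congr log_price
    _ = ENNReal.log (marrm S B π X) := by
        rw [← ENNReal.logOrderIso_apply, marrm, sInf_image]
        simp only [OrderIso.map_iInf, D]

theorem log_ofReal_exp_mul (r : ℝ) (a : ℝ≥0∞) :
    ENNReal.log (ENNReal.ofReal (Real.exp r) * a) = ENNReal.log a + r := by
  rw [ENNReal.log_mul_add, ENNReal.log_ofReal_of_pos (Real.exp_pos r), Real.log_exp, add_comm]

theorem marrm_exp_mul_eq_iff_marm_log_add_eq (hS : S ⊆ L0pos Ω) (hB : B ⊆ L0pos Ω)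
    (hπ : ∀ Z ∈ S, 0 < π Z) (hX : X ∈ L0pos Ω) (r : ℝ) :
    marrm S B π (fun ω => Real.exp r * X ω) = ENNReal.ofReal (Real.exp r) * marrm S B π X ↔
      marm (logIm S) (logIm B) (logConj π) (fun ω => Real.log (X ω) + r) =
        marm (logIm S) (logIm B) (logConj π) (fun ω => Real.log (X ω)) + r := by
  have hrX : (fun ω => Real.exp r * X ω) ∈ L0pos Ω := fun ω => mul_pos (Real.exp_pos r) (hX ω)
  have log_exp_mul : (fun ω => Real.log (X ω) + r) = fun ω => Real.log (Real.exp r * X ω) := by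
    funext ω
    rw [Real.log_mul (Real.exp_ne_zero r) (hX ω).ne', Real.log_exp, add_comm]
  rw [log_exp_mul, marm_log_eq_log_marrm hS hB hπ hrX, marm_log_eq_log_marrm hS hB hπ hX,
    ← log_ofReal_exp_mul, ENNReal.log_injective.eq_iff]

theorem marrm_posHom_iff_marm_cashAdditive_general (hC : C ⊆ L0pos Ω) (hS : S ⊆ L0pos Ω)
    (hB : B ⊆ L0pos Ω) (hπ : ∀ Z ∈ S, 0 < π Z) :
    (∀ l : ℝ, 0 < l → ∀ X ∈ C,
        marrm S B π (fun ω => l * X ω) = ENNReal.ofReal l * marrm S B π X) ↔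
      ∀ Y ∈ logIm C, ∀ r : ℝ,
        marm (logIm S) (logIm B) (logConj π) (fun ω => Y ω + r) =
          marm (logIm S) (logIm B) (logConj π) Y + (r : EReal) := by
  constructor
  · rintro posHom _ ⟨X, hX, rfl⟩ r
    exact (marrm_exp_mul_eq_iff_marm_log_add_eq hS hB hπ (hC hX) r).1
      (posHom _ (Real.exp_pos r) X hX)
  · intro cashAdditive l hl X hX
    have hiff := marrm_exp_mul_eq_iff_marm_log_add_eq hS hB hπ (hC hX) (Real.log l)
    rw [Real.exp_log hl] at hiff
    exact hiff.2 (cashAdditive _ (mem_image_of_mem _ hX) _)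

end

theorem marrm_posHom_iff_marm_cashAdditive {Ω : Type*} [MeasurableSpace Ω] (P : Measure Ω) [IsProbabilityMeasure P]
    (C S K : Set (Ω → ℝ)) (π ρt : (Ω → ℝ) → ℝ)
    (hCne : C.Nonempty) (hCpos : C ⊆ L0pos Ω)
    (hSne : S.Nonempty) (hSpos : S ⊆ L0pos Ω)
    (hπpos : ∀ Z ∈ S, 0 < π Z)
    (hKne : K.Nonempty) (hKpos : K ⊆ L0pos Ω)
    (hKcone : ∀ l : ℝ, 0 < l → ∀ X ∈ K, (fun ω => l * X ω) ∈ K)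
    (hKinf : LinftyPos P ⊆ K)
    (hcompat : ∀ X ∈ C, ∀ Z ∈ S, (fun ω => X ω / Z ω) ∈ K)
    (hCmul : ∀ X ∈ C, ∀ Y ∈ C, (fun ω => X ω * Y ω) ∈ C)
    (hCone : (fun _ => (1:ℝ)) ∈ C)
    (hCinv : ∀ X ∈ C, (fun ω => (X ω)⁻¹) ∈ C)
    (hρmono : ∀ X ∈ K, ∀ Y ∈ K, (∀ᵐ ω ∂P, X ω ≤ Y ω) → ρt X ≤ ρt Y)
    (hρhom : ∀ l : ℝ, 0 < l → ∀ X ∈ K, ρt (fun ω => l * X ω) = l * ρt X)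
    (hρpos : ∀ X ∈ K, 0 < ρt X)
    (hρone : ρt (fun _ => (1:ℝ)) = 1)
    (hCcone : ∀ l : ℝ, 0 < l → ∀ X ∈ C, (fun ω => l * X ω) ∈ C) :
    (∀ l : ℝ, 0 < l → ∀ X ∈ C,
        marrm S (rrmAccept K ρt) π (fun ω => l * X ω)
          = ENNReal.ofReal l * marrm S (rrmAccept K ρt) π X)
      ↔ (∀ Y ∈ logIm C, ∀ r : ℝ,
        marmOf S K π ρt (fun ω => Y ω + r) = marmOf S K π ρt Y + (r : EReal)) := by
  rw [marmOf_eq_marm S π hKpos hρpos]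
  exact marrm_posHom_iff_marm_cashAdditive_general hCpos hSpos (fun _ hX => hKpos hX.1) hπpos
end
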